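/- Let D and E be reflexive relations on a finite type V, and let Ḡ := Relation.TransGen (prec E). Then Ḡ is a feasible information relaxation: E is contained in Ḡ (∀ j i, E j i → Ḡ j i) and Ḡ is partially nested. (Feasibility part of Theorem 1: the transitive closure of the precedence graph is a partially nested supergraph of the given information graph.) -/

import Mathlib

/-- The precedence relation induced by the coupling relation `D` and the
information graph `E`: subsystem `j` is a precedent of subsystem `i` if some
subsystem `k` whose outputs `i` has access to can be affected by `j`'s input. -/
def prec {V : Type*} (D E : V → V → Prop) (j i : V) : Prop := ∃ k, E k i ∧ D j k

/-- Partial nestedness of the information graph `E` with respect to the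
coupling relation `D`: whenever `j` is a precedent of `i`, the in-neighborhood
of `j` is contained in that of `i`. -/
def PartiallyNested {V : Type*} (D E : V → V → Prop) : Prop :=
  ∀ j i, prec D E j i → ∀ k, E k j → E k i

section

variable {V : Type*} {D E G : V → V → Prop}

theorem infoGraph_le_prec [Std.Refl D] : E ≤ prec D E :=
  fun j _ hji => ⟨j, hji, refl_of D j⟩

theorem coupling_le_prec [Std.Refl E] : D ≤ prec D E :=
  fun _ k hjk => ⟨k, refl_of E k, hjk⟩

theorem partiallyNested_of_coupling_le [IsTrans V G] (hDG : D ≤ G) : PartiallyNested D G := by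
  rintro j i ⟨k, hki, hjk⟩ l hlj
  calc
    G l j := hlj
    G j k := hDG j k hjk
    G k i := hki

end

theorem stmt_4_general {V : Type*} (D E : V → V → Prop) [Std.Refl D] [Std.Refl E] :
    (∀ j i, E j i → Relation.TransGen (prec D E) j i) ∧
      PartiallyNested D (Relation.TransGen (prec D E)) := by
  constructor
  · exact fun j i hji => .single (infoGraph_le_prec j i hji)
  · exact partiallyNested_of_coupling_le fun j k hjk => .single (coupling_le_prec j k hjk)

/-- Feasibility part of Theorem 1: the transitive closure of the precedence
graph is a partially nested supergraph of the given information graph. -/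
theorem stmt_4 {V : Type*} [Fintype V] (D E : V → V → Prop)
    (hD : Reflexive D) (hE : Reflexive E) :
    (∀ j i, E j i → Relation.TransGen (prec D E) j i) ∧
      PartiallyNested D (Relation.TransGen (prec D E)) :=
  @stmt_4_general V D E ⟨hD⟩ ⟨hE⟩
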